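/- Let G be a connected non-complete graph and u,v a pair of vertices maximizing |I(u,v)|. If neither u nor v is a weakly toll extreme vertex of G, then G has a weakly toll interval set of size at most 8, i.e., wtn(G) ≤ 8. -/

import Mathlib

open SimpleGraph

variable {V : Type*}

/-- Closed neighborhood N[x]. -/
def closedNbhd (G : SimpleGraph V) (x : V) : Set V := insert x (G.neighborSet x)

/-- The true-twin class of `x`: vertices with the same closed neighborhood. -/
def twinClass (G : SimpleGraph V) (x : V) : Set V :=
  {y | closedNbhd G y = closedNbhd G x}

/-- A weakly toll walk between distinct nonadjacent endpoints: the first endpoint is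
adjacent only to the second vertex of the walk, and the last endpoint only to the
second-to-last vertex. -/
def IsWeaklyTollWalk (G : SimpleGraph V) {u w : V} (p : G.Walk u w) : Prop :=
  u ≠ w ∧ ¬ G.Adj u w ∧
  (∀ x ∈ p.support, G.Adj u x → x = p.getVert 1) ∧
  (∀ x ∈ p.support, G.Adj x w → x = p.getVert (p.length - 1))

/-- The weakly toll interval of a set. -/
def wtInterval (G : SimpleGraph V) (S : Set V) : Set V :=
  S ∪ {x | ∃ u ∈ S, ∃ w ∈ S, ∃ p : G.Walk u w, IsWeaklyTollWalk G p ∧ x ∈ p.support}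

/-- Weakly toll convex set. -/
def WTConvex (G : SimpleGraph V) (S : Set V) : Prop := wtInterval G S = S

/-- The weakly toll convex hull. -/
def wtHull (G : SimpleGraph V) (S : Set V) : Set V :=
  ⋂₀ {T : Set V | S ⊆ T ∧ WTConvex G T}

/-- The weakly toll interval number. -/
noncomputable def wtn (G : SimpleGraph V) [Fintype V] : ℕ :=
  sInf {n | ∃ S : Finset V, S.card = n ∧ wtInterval G ↑S = Set.univ}

/-- The weakly toll hull number. -/
noncomputable def wth (G : SimpleGraph V) [Fintype V] : ℕ :=
  sInf {n | ∃ S : Finset V, S.card = n ∧ wtHull G ↑S = Set.univ}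

/-- `S` separates some pair of vertices of `G`. -/
def IsSeparator (G : SimpleGraph V) (S : Set V) : Prop :=
  ∃ a, ∃ ha : a ∈ (Sᶜ : Set V), ∃ b, ∃ hb : b ∈ (Sᶜ : Set V),
    G.Reachable a b ∧ ¬ (G.induce (Sᶜ : Set V)).Reachable ⟨a, ha⟩ ⟨b, hb⟩

/-- A clique separator. -/
def IsCliqueSeparator (G : SimpleGraph V) (S : Set V) : Prop :=
  G.IsClique S ∧ IsSeparator G S

/-- A graph is prime if it has no clique separator. -/
def IsPrime (G : SimpleGraph V) : Prop := ∀ S : Set V, ¬ IsCliqueSeparator G S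

/-- Maximal prime subgraph (given by its vertex set). -/
def IsMPSubgraph (G : SimpleGraph V) (M : Set V) : Prop :=
  IsPrime (G.induce M) ∧ ∀ M' : Set V, M ⊆ M' → IsPrime (G.induce M') → M' = M

/-- Extremal mp-subgraph. -/
def IsExtremalMP (G : SimpleGraph V) (M : Set V) : Prop :=
  IsMPSubgraph G M ∧ ∃ M', IsMPSubgraph G M' ∧ M' ≠ M ∧
    ∀ M'', IsMPSubgraph G M'' → M'' ≠ M → M ∩ M'' ⊆ M ∩ M'

/-- Vertices of `M` shared with another mp-subgraph. -/
def Sh (G : SimpleGraph V) (M : Set V) : Set V :=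
  {v | v ∈ M ∧ ∃ M', IsMPSubgraph G M' ∧ M' ≠ M ∧ v ∈ M'}

/-- Vertices exclusive to `M`. -/
def Exc (G : SimpleGraph V) (M : Set V) : Set V := M \ Sh G M

/-- Induced path: a path with no chords. -/
def IsInducedPath (G : SimpleGraph V) {u v : V} (p : G.Walk u v) : Prop :=
  p.IsPath ∧ ∀ i j : ℕ, i + 1 < j → j ≤ p.length → ¬ G.Adj (p.getVert i) (p.getVert j)

/-- Monophonic interval. -/
def monoInterval (G : SimpleGraph V) (S : Set V) : Set V :=
  S ∪ {x | ∃ u ∈ S, ∃ w ∈ S, ∃ p : G.Walk u w, IsInducedPath G p ∧ x ∈ p.support}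

/-- Monophonically convex set. -/
def MonoConvex (G : SimpleGraph V) (S : Set V) : Prop := monoInterval G S = S

/-- Monophonic hull. -/
def monoHull (G : SimpleGraph V) (S : Set V) : Set V :=
  ⋂₀ {T : Set V | S ⊆ T ∧ MonoConvex G T}

/-!
A connected set `C` containing `u` and `v`, in which each of them has at most one neighbor, is
swept by a weakly toll walk from `u` to `v`. So intervals are unions of such sets, and these can be
modified by adding, deleting and exchanging vertices.

If the interval `I(u, v)` is maximal, every vertex outside it is adjacent to `u` or to `v`. Let `F`
be the component of `v` in `G - N[u]`. Suppose first that some neighbor `c` of `u` attached to `F`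
has a neighbor `z` outside `N[u] ∪ F`. Then `I(u, v, z)` contains all neighbors of `u`. Otherwise
all links between `u` and `v` stay in `N[u] ∪ F`, and maximality forces the neighbors of `u` outside
`I(u, v)` to be true twins of `u`. As `u` is not extreme, it is interior to a walk between some `p`
and `q`, and in this walk `u` can be exchanged for any of its twins, so `I(p, q)` contains them.
Doing the same at `v` gives six vertices in total.
-/

section Connectivity

variable {G : SimpleGraph V} {C : Set V} {a u x y : V}

lemma mem_closedNbhd : y ∈ closedNbhd G x ↔ y = x ∨ G.Adj x y := Iff.rfl

lemma neighborSet_inter_insert (h : ¬ G.Adj u x) :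
    G.neighborSet u ∩ insert x C = G.neighborSet u ∩ C :=
  Set.inter_insert_of_notMem h

lemma connected_induce_insert (hC : (G.induce C).Connected) (hy : y ∈ C) (hxy : G.Adj x y) :
    (G.induce (insert x C)).Connected := by
  have hunion : ({x, y} ∪ C : Set V) = insert x C := by
    rw [Set.insert_union, Set.singleton_union, Set.insert_eq_of_mem hy]
  exact hunion ▸ induce_union_connected (induce_pair_connected_of_adj hxy).preconnected
    hC.preconnected ⟨y, by simp, hy⟩

lemma exists_walk_support_subset (hC : (G.induce C).Connected) (hx : x ∈ C) (hy : y ∈ C) :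
    ∃ p : G.Walk x y, ∀ z ∈ p.support, z ∈ C := by
  obtain ⟨p⟩ := hC.preconnected ⟨x, hx⟩ ⟨y, hy⟩
  refine ⟨p.map (Embedding.induce C).toHom, fun z hz => ?_⟩
  obtain ⟨w, -, rfl⟩ := List.mem_map.1 (Walk.support_map _ p ▸ hz)
  exact w.2

lemma exists_adj_boundary (hC : (G.induce C).Connected) {S : Set V} (hx : x ∈ C) (hxS : x ∈ S)
    (hy : y ∈ C) (hyS : y ∉ S) : ∃ z ∈ C, ∃ w ∈ C, G.Adj z w ∧ z ∈ S ∧ w ∉ S := by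
  obtain ⟨p, hp⟩ := exists_walk_support_subset hC hx hy
  obtain ⟨d, hd, hfst, hsnd⟩ := p.exists_boundary_dart S hxS hyS
  exact ⟨d.fst, hp _ (p.dart_fst_mem_support_of_mem_darts hd), d.snd,
    hp _ (p.dart_snd_mem_support_of_mem_darts hd), d.adj, hfst, hsnd⟩

lemma connected_of_surjective_of_eq_or_adj {W : Type*} {H : SimpleGraph W} {f : V → W}
    (hG : G.Connected) (hf : Function.Surjective f)
    (hadj : ∀ y z, G.Adj y z → f y = f z ∨ H.Adj (f y) (f z)) : H.Connected := by
  have hreachable (y z : V) : H.Reachable (f y) (f z) := by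
    obtain ⟨p⟩ := hG.preconnected y z
    induction p with
    | nil => exact Reachable.refl _
    | cons hyz _ ih =>
      rcases hadj _ _ hyz with h | h
      · exact h ▸ ih
      · exact h.reachable.trans ih
  have : Nonempty W := hG.nonempty.map f
  exact ⟨hf.forall₂.2 hreachable⟩

lemma connected_induce_replace (hC : (G.induce C).Connected) (hu : u ∈ C)
    (ha : G.neighborSet u ∩ C ⊆ closedNbhd G a) :
    (G.induce (insert a (C \ {u}))).Connected := by
  classical
  let f (y : C) : ↥(insert a (C \ {u})) :=
    if hy : (y : V) = u then ⟨a, Set.mem_insert _ _⟩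
    else ⟨y, Set.mem_insert_of_mem _ ⟨y.2, hy⟩⟩
  have hf_self {y : C} (hy : (y : V) = u) : (f y : V) = a := by simp [f, hy]
  have hf_ne {y : C} (hy : (y : V) ≠ u) : (f y : V) = y := by simp [f, hy]
  have hf_center {y z : C} (hy : (y : V) = u) (hyz : G.Adj y z) :
      f z = f y ∨ G.Adj (f y) (f z) := by
    have hz : (z : V) ≠ u := fun hz => hyz.ne (hy.trans hz.symm)
    rw [Subtype.ext_iff, hf_self hy, hf_ne hz]
    exact ha ⟨hy ▸ hyz, z.2⟩
  refine connected_of_surjective_of_eq_or_adj (f := f) hC ?_ fun y z hyz => ?_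
  · rintro ⟨y, rfl | ⟨hyC, hyu⟩⟩
    · exact ⟨⟨u, hu⟩, Subtype.ext (hf_self rfl)⟩
    · exact ⟨⟨y, hyC⟩, Subtype.ext (hf_ne hyu)⟩
  · by_cases hy : (y : V) = u
    · exact (hf_center hy hyz).imp_left Eq.symm
    · by_cases hz : (z : V) = u
      · exact (hf_center hz hyz.symm).imp_right Adj.symm
      · refine Or.inr ?_
        rw [comap_adj] at hyz ⊢
        simpa only [Function.Embedding.subtype_apply, hf_ne hy, hf_ne hz] using hyz

lemma exists_connected_subset_subsingleton_neighborSet_inter (hC : (G.induce C).Connected)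
    (hx : x ∈ C) (hy : y ∈ C) :
    ∃ D ⊆ C, (G.induce D).Connected ∧ x ∈ D ∧ y ∈ D ∧ (G.neighborSet y ∩ D).Subsingleton := by
  obtain ⟨p, hp⟩ := exists_walk_support_subset hC hx hy
  induction p with
  | nil =>
    refine ⟨{_}, by simpa using hx, ?_, rfl, rfl,
      Set.subsingleton_singleton.anti Set.inter_subset_right⟩
    simp [induce_singleton_eq_top, connected_top]
  | @cons x z y hxz p ih =>
    have hz : z ∈ C := hp z (by simp)
    obtain ⟨D, hDC, hD, hzD, hyD, hsub⟩ := ih hz hy fun w hw => hp w (by simp [hw])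
    by_cases hyx : G.Adj y x
    · refine ⟨{x, y}, Set.pair_subset hx hy, induce_pair_connected_of_adj hyx.symm, by simp,
        by simp, Set.subsingleton_of_subset_singleton (a := x) ?_⟩
      rintro w ⟨hyw, rfl | rfl⟩
      · rfl
      · exact absurd hyw G.irrefl
    · refine ⟨insert x D, Set.insert_subset hx hDC, connected_induce_insert hD hzD hxz, by simp,
        by simp [hyD], ?_⟩
      rwa [neighborSet_inter_insert hyx]

end Connectivity

/-- `IsWeaklyTollLink G u v C`: the set `C` is the vertex set of a weakly toll walk between `u` and
`v`, up to finiteness of `C`, described without walks. -/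
structure IsWeaklyTollLink (G : SimpleGraph V) (u v : V) (C : Set V) : Prop where
  ne : u ≠ v
  not_adj : ¬ G.Adj u v
  left_mem : u ∈ C
  right_mem : v ∈ C
  connected : (G.induce C).Connected
  left_subsingleton : (G.neighborSet u ∩ C).Subsingleton
  right_subsingleton : (G.neighborSet v ∩ C).Subsingleton

section Links

variable {G : SimpleGraph V} {C D : Set V} {c u v x y : V}

lemma IsWeaklyTollLink.symm (h : IsWeaklyTollLink G u v C) : IsWeaklyTollLink G v u C :=
  ⟨h.ne.symm, mt Adj.symm h.not_adj, h.right_mem, h.left_mem, h.connected, h.right_subsingleton,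
    h.left_subsingleton⟩

lemma IsWeaklyTollLink.insert_of_not_adj (h : IsWeaklyTollLink G u v C) (hy : y ∈ C)
    (hxy : G.Adj x y) (hux : ¬ G.Adj u x) (hvx : ¬ G.Adj v x) :
    IsWeaklyTollLink G u v (insert x C) where
  ne := h.ne
  not_adj := h.not_adj
  left_mem := Set.mem_insert_of_mem _ h.left_mem
  right_mem := Set.mem_insert_of_mem _ h.right_mem
  connected := connected_induce_insert h.connected hy hxy
  left_subsingleton := by rw [neighborSet_inter_insert hux]; exact h.left_subsingleton
  right_subsingleton := by rw [neighborSet_inter_insert hvx]; exact h.right_subsingleton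

lemma isWeaklyTollLink_insert_left (hD : (G.induce D).Connected) (hv : v ∈ D)
    (hvD : (G.neighborSet v ∩ D).Subsingleton) (hne : u ≠ v) (hadj : ¬ G.Adj u v) (hc : c ∈ D)
    (huc : G.Adj u c) (huD : ∀ y ∈ D, G.Adj u y → y = c) :
    IsWeaklyTollLink G u v (insert u D) where
  ne := hne
  not_adj := hadj
  left_mem := Set.mem_insert _ _
  right_mem := Set.mem_insert_of_mem _ hv
  connected := connected_induce_insert hD hc huc
  left_subsingleton := by
    rw [neighborSet_inter_insert G.irrefl]
    exact Set.subsingleton_of_subset_singleton fun y hy => huD y hy.2 hy.1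
  right_subsingleton := by
    rwa [neighborSet_inter_insert (mt Adj.symm hadj)]

lemma isWeaklyTollLink_triple (hne : u ≠ v) (hadj : ¬ G.Adj u v) (huc : G.Adj u c)
    (hcv : G.Adj c v) : IsWeaklyTollLink G u v {u, c, v} := by
  refine isWeaklyTollLink_insert_left (induce_pair_connected_of_adj hcv) (by simp) ?_ hne hadj
    (by simp) huc ?_
  · refine Set.subsingleton_of_subset_singleton (a := c) ?_
    rintro y ⟨hvy, rfl | rfl⟩
    · rfl
    · exact absurd hvy G.irrefl
  · rintro y (rfl | rfl) huy
    · rfl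
    · exact absurd huy hadj

lemma exists_isWeaklyTollLink (hG : G.Connected) (hne : u ≠ v) (hadj : ¬ G.Adj u v) :
    ∃ C, IsWeaklyTollLink G u v C := by
  have huniv : (G.induce Set.univ).Connected := (induceUnivIso G).connected_iff.2 hG
  obtain ⟨D, -, hD, hu, hv, hvD⟩ := exists_connected_subset_subsingleton_neighborSet_inter huniv
    (Set.mem_univ u) (Set.mem_univ v)
  obtain ⟨E, hED, hE, hv', hu', huE⟩ :=
    exists_connected_subset_subsingleton_neighborSet_inter hD hv hu
  exact ⟨E, hne, hadj, hu', hv', hE, huE, hvD.anti (Set.inter_subset_inter_right _ hED)⟩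

lemma IsWeaklyTollWalk.isWeaklyTollLink {p : G.Walk u v} (h : IsWeaklyTollWalk G p) :
    IsWeaklyTollLink G u v {x | x ∈ p.support} where
  ne := h.1
  not_adj := h.2.1
  left_mem := p.start_mem_support
  right_mem := p.end_mem_support
  connected := p.connected_induce_support
  left_subsingleton := Set.subsingleton_of_subset_singleton fun y hy => h.2.2.1 y hy.2 hy.1
  right_subsingleton :=
    Set.subsingleton_of_subset_singleton fun y hy => h.2.2.2 y hy.2 (Adj.symm hy.1)

lemma IsWeaklyTollLink.exists_isWeaklyTollWalk (h : IsWeaklyTollLink G u v C) (hx : x ∈ C) :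
    ∃ p : G.Walk u v, IsWeaklyTollWalk G p ∧ x ∈ p.support := by
  obtain ⟨p, hp⟩ := exists_walk_support_subset h.connected h.left_mem hx
  obtain ⟨q, hq⟩ := exists_walk_support_subset h.connected hx h.right_mem
  have hpq : ∀ z ∈ (p.append q).support, z ∈ C := fun z hz =>
    ((p.mem_support_append_iff q).1 hz).elim (hp z) (hq z)
  have hnil : ¬ (p.append q).Nil := Walk.not_nil_of_ne h.ne
  refine ⟨p.append q, ⟨h.ne, h.not_adj, fun z hz huz => ?_, fun z hz hzv => ?_⟩, by simp⟩
  · exact h.left_subsingleton ⟨huz, hpq z hz⟩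
      ⟨Walk.adj_snd hnil, hpq _ (Walk.getVert_mem_support _ _)⟩
  · exact h.right_subsingleton ⟨hzv.symm, hpq z hz⟩
      ⟨(Walk.adj_penultimate hnil).symm, hpq _ (Walk.getVert_mem_support _ _)⟩

end Links

section Intervals

variable {G : SimpleGraph V} {C S T : Set V} {a p q u v x : V}

lemma wtInterval_mono (h : S ⊆ T) : wtInterval G S ⊆ wtInterval G T := by
  rintro x (hx | ⟨u, hu, w, hw, p, hp, hx⟩)
  · exact Or.inl (h hx)
  · exact Or.inr ⟨u, h hu, w, h hw, p, hp, hx⟩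

lemma IsWeaklyTollLink.subset_wtInterval (h : IsWeaklyTollLink G u v C) :
    C ⊆ wtInterval G {u, v} := fun x hx => by
  obtain ⟨p, hp, hxp⟩ := h.exists_isWeaklyTollWalk hx
  exact Or.inr ⟨u, by simp, v, by simp, p, hp, hxp⟩

lemma mem_wtInterval_pair_iff (hG : G.Connected) (hne : u ≠ v) (hadj : ¬ G.Adj u v) :
    x ∈ wtInterval G {u, v} ↔ ∃ C, IsWeaklyTollLink G u v C ∧ x ∈ C := by
  refine ⟨?_, fun ⟨C, hC, hx⟩ => hC.subset_wtInterval hx⟩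
  rintro ((rfl | rfl) | ⟨a, rfl | rfl, b, rfl | rfl, p, hp, hx⟩)
  · obtain ⟨C, hC⟩ := exists_isWeaklyTollLink hG hne hadj
    exact ⟨C, hC, hC.left_mem⟩
  · obtain ⟨C, hC⟩ := exists_isWeaklyTollLink hG hne hadj
    exact ⟨C, hC, hC.right_mem⟩
  · exact absurd rfl hp.1
  · exact ⟨_, hp.isWeaklyTollLink, hx⟩
  · exact ⟨_, hp.isWeaklyTollLink.symm, hx⟩
  · exact absurd rfl hp.1

lemma wtInterval_pair_of_eq_or_adj (h : u = v ∨ G.Adj u v) : wtInterval G {u, v} = {u, v} := by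
  refine Set.Subset.antisymm ?_ Set.subset_union_left
  rintro x (hx | ⟨a, ha, b, hb, p, hp, -⟩)
  · exact hx
  · have hne := hp.1
    have hadj := hp.2.1
    have hsymm := fun h : G.Adj u v => h.symm
    simp only [Set.mem_insert_iff, Set.mem_singleton_iff] at ha hb
    grind

lemma exists_isWeaklyTollLink_of_not_wtConvex (hu : ¬ WTConvex G ({u}ᶜ : Set V)) :
    ∃ p q C, p ≠ u ∧ q ≠ u ∧ IsWeaklyTollLink G p q C ∧ u ∈ C := by
  by_contra hnone
  refine hu (Set.Subset.antisymm ?_ Set.subset_union_left)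
  rintro x (hx | ⟨p, hp, q, hq, w, hw, hx⟩)
  · exact hx
  · rintro rfl
    exact hnone ⟨p, q, _, hp, hq, hw.isWeaklyTollLink, hx⟩

lemma IsWeaklyTollLink.mem_wtInterval_of_mem_twinClass (h : IsWeaklyTollLink G p q C) (hu : u ∈ C)
    (hpu : p ≠ u) (hqu : q ≠ u) (ha : a ∈ twinClass G u) : a ∈ wtInterval G {p, q} := by
  have hiff (y : V) : y = a ∨ G.Adj a y ↔ y = u ∨ G.Adj u y := Set.ext_iff.1 ha y
  by_cases haC : a ∈ C
  · exact h.subset_wtInterval haC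
  have hends {r : V} (hru : r ≠ u) (hsub : (G.neighborSet r ∩ C).Subsingleton) :
      (G.neighborSet r ∩ insert a (C \ {u})).Subsingleton := by
    by_cases hra : G.Adj r a
    · have hur : G.Adj u r := ((hiff r).1 (Or.inr hra.symm)).resolve_left hru
      refine Set.subsingleton_of_subset_singleton (a := a) ?_
      rintro y ⟨hry, rfl | ⟨hyC, hyu⟩⟩
      · rfl
      · exact absurd (hsub ⟨hry, hyC⟩ ⟨hur.symm, hu⟩) hyu
    · rw [neighborSet_inter_insert hra]
      exact hsub.anti (Set.inter_subset_inter_right _ Set.sdiff_subset)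
  have hlink : IsWeaklyTollLink G p q (insert a (C \ {u})) :=
    { ne := h.ne
      not_adj := h.not_adj
      left_mem := Set.mem_insert_of_mem _ ⟨h.left_mem, hpu⟩
      right_mem := Set.mem_insert_of_mem _ ⟨h.right_mem, hqu⟩
      connected := connected_induce_replace h.connected hu fun y hy => (hiff y).2 (Or.inr hy.1)
      left_subsingleton := hends hpu h.left_subsingleton
      right_subsingleton := hends hqu h.right_subsingleton }
  exact hlink.subset_wtInterval (Set.mem_insert _ _)

end Intervals

/-- The component of `v` in `G - N[u]`; it is empty if `v` lies in `N[u]`. -/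
def farSide (G : SimpleGraph V) (u v : V) : Set V :=
  {x | ∃ p : G.Walk x v, ∀ y ∈ p.support, y ∉ closedNbhd G u}

/-- The neighbors of `u` attached to the component of `v` in `G - N[u]`. -/
def gates (G : SimpleGraph V) (u v : V) : Set V :=
  {c | G.Adj u c ∧ ∃ q ∈ farSide G u v, G.Adj c q}

section Gates

variable {G : SimpleGraph V} {C : Set V} {a c u v x y z : V}

lemma notMem_closedNbhd_of_mem_farSide (hx : x ∈ farSide G u v) : x ∉ closedNbhd G u := by
  obtain ⟨p, hp⟩ := hx
  exact hp x p.start_mem_support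

lemma not_adj_of_mem_farSide (hx : x ∈ farSide G u v) : ¬ G.Adj u x :=
  fun h => notMem_closedNbhd_of_mem_farSide hx (Or.inr h)

lemma right_mem_farSide (hne : u ≠ v) (hadj : ¬ G.Adj u v) : v ∈ farSide G u v :=
  ⟨.nil, by simpa [mem_closedNbhd] using ⟨hne.symm, hadj⟩⟩

lemma mem_farSide_of_adj (hy : y ∈ farSide G u v) (hxy : G.Adj x y) (hx : x ∉ closedNbhd G u) :
    x ∈ farSide G u v := by
  obtain ⟨p, hp⟩ := hy
  exact ⟨.cons hxy p, by simpa [hx] using hp⟩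

lemma mem_gates_of_adj (hy : y ∈ farSide G u v) (hxy : G.Adj x y) (hx : x ∉ farSide G u v) :
    x ∈ gates G u v := by
  have hxN : x ∈ closedNbhd G u := not_not.1 (mt (mem_farSide_of_adj hy hxy) hx)
  refine ⟨hxN.resolve_left ?_, y, hy, hxy⟩
  rintro rfl
  exact not_adj_of_mem_farSide hy hxy

lemma exists_connected_of_mem_gates (hc : c ∈ gates G u v) :
    ∃ D ⊆ insert c (farSide G u v), (G.induce D).Connected ∧ c ∈ D ∧ v ∈ D ∧
      (G.neighborSet v ∩ D).Subsingleton := by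
  classical
  obtain ⟨-, q, ⟨p, hp⟩, hcq⟩ := hc
  obtain ⟨D, hDp, hD⟩ := exists_connected_subset_subsingleton_neighborSet_inter
    (p.cons hcq).connected_induce_support (Walk.start_mem_support _) (Walk.end_mem_support _)
  refine ⟨D, fun y hy => ?_, hD⟩
  rcases List.mem_cons.1 (hDp hy) with rfl | hyp
  · exact Set.mem_insert _ _
  · exact Set.mem_insert_of_mem _
      ⟨p.dropUntil y hyp, fun w hw => hp w (p.support_dropUntil_subset_support hyp hw)⟩

lemma gates_subset_wtInterval (hne : u ≠ v) (hadj : ¬ G.Adj u v) :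
    gates G u v ⊆ wtInterval G {u, v} := fun c hc => by
  obtain ⟨D, hDF, hD, hcD, hvD, hsub⟩ := exists_connected_of_mem_gates hc
  have huD (y : V) (hy : y ∈ D) (huy : G.Adj u y) : y = c :=
    (hDF hy).resolve_right fun hyF => not_adj_of_mem_farSide hyF huy
  exact (isWeaklyTollLink_insert_left hD hvD hsub hne hadj hcD hc.1 huD).subset_wtInterval
    (Set.mem_insert_of_mem _ hcD)

lemma not_adj_farSide_of_notMem_wtInterval (hne : u ≠ v) (hadj : ¬ G.Adj u v) (hua : G.Adj u a)
    (ha : a ∉ wtInterval G {u, v}) (hx : x ∈ farSide G u v) : ¬ G.Adj a x :=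
  fun hax => ha (gates_subset_wtInterval hne hadj ⟨hua, x, hx, hax⟩)

lemma IsWeaklyTollLink.exists_mem_gates (h : IsWeaklyTollLink G u v C) :
    ∃ c ∈ gates G u v, G.neighborSet u ∩ C = {c} := by
  have hu : u ∈ (farSide G u v)ᶜ := fun hu => notMem_closedNbhd_of_mem_farSide hu (Or.inl rfl)
  have hv : v ∉ (farSide G u v)ᶜ := fun hv => hv (right_mem_farSide h.ne h.not_adj)
  obtain ⟨c, hcC, q, -, hcq, hc, hq⟩ := exists_adj_boundary h.connected h.left_mem hu h.right_mem hv
  have hcg : c ∈ gates G u v := mem_gates_of_adj (not_not.1 hq) hcq hc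
  exact ⟨c, hcg, h.left_subsingleton.eq_singleton_of_mem ⟨hcg.1, hcC⟩⟩

lemma IsWeaklyTollLink.connected_diff_left (h : IsWeaklyTollLink G u v C) :
    (G.induce (C \ {u})).Connected := by
  obtain ⟨c, -, hc⟩ := h.exists_mem_gates
  obtain ⟨huc, hcC⟩ : c ∈ G.neighborSet u ∩ C := hc ▸ rfl
  have hmem : c ∈ C \ {u} := ⟨hcC, huc.ne'⟩
  rw [← Set.insert_eq_of_mem hmem]
  exact connected_induce_replace h.connected h.left_mem (by simp [hc, mem_closedNbhd])

lemma IsWeaklyTollLink.subset_closedNbhd_union_farSide (h : IsWeaklyTollLink G u v C)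
    (hgates : ∀ c ∈ gates G u v, G.neighborSet c ⊆ closedNbhd G u ∪ farSide G u v) :
    C ⊆ closedNbhd G u ∪ farSide G u v := by
  intro y hy
  by_contra hyS
  have hv : v ∉ (closedNbhd G u ∪ farSide G u v)ᶜ := fun hv =>
    hv (Or.inr (right_mem_farSide h.ne h.not_adj))
  obtain ⟨z, -, b, hbC, hzb, hz, hb⟩ := exists_adj_boundary h.connected hy hyS h.right_mem hv
  obtain ⟨c, hc, hcC⟩ := h.exists_mem_gates
  rcases not_not.1 hb with (rfl | hub) | hbF
  · exact hz (Or.inl (Or.inr hzb.symm))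
  · obtain rfl : b = c := hcC.subset ⟨hub, hbC⟩
    exact hz (hgates b hc hzb.symm)
  · exact hz (Or.inr (mem_farSide_of_adj hbF hzb fun hzN => hz (Or.inl hzN)))

lemma IsWeaklyTollLink.eq_or_eq_of_adj (h : IsWeaklyTollLink G u v C)
    (hgates : ∀ c ∈ gates G u v, G.neighborSet c ⊆ closedNbhd G u ∪ farSide G u v)
    (hC : G.neighborSet u ∩ C = {c}) (hua : G.Adj u a) (ha : a ∉ wtInterval G {u, v})
    (hy : y ∈ C) (hay : G.Adj a y) : y = u ∨ y = c := by
  rcases h.subset_closedNbhd_union_farSide hgates hy with (rfl | huy) | hyF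
  · exact Or.inl rfl
  · exact Or.inr (hC.subset ⟨huy, hy⟩)
  · exact absurd hay (not_adj_farSide_of_notMem_wtInterval h.ne h.not_adj hua ha hyF)

lemma IsWeaklyTollLink.subset_wtInterval_of_not_adj (h : IsWeaklyTollLink G u v C)
    (hgates : ∀ c ∈ gates G u v, G.neighborSet c ⊆ closedNbhd G u ∪ farSide G u v)
    (hC : G.neighborSet u ∩ C = {c}) (hua : G.Adj u a) (ha : a ∉ wtInterval G {u, v})
    (hac : ¬ G.Adj a c) : C ⊆ wtInterval G {a, v} := by
  have hne : a ≠ v := fun e => h.not_adj (e ▸ hua)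
  have hav : ¬ G.Adj a v :=
    not_adj_farSide_of_notMem_wtInterval h.ne h.not_adj hua ha (right_mem_farSide h.ne h.not_adj)
  refine subset_trans (Set.subset_insert a C) (IsWeaklyTollLink.subset_wtInterval ?_)
  refine isWeaklyTollLink_insert_left h.connected h.right_mem h.right_subsingleton hne hav
    h.left_mem hua.symm fun y hy hay => ?_
  exact (h.eq_or_eq_of_adj hgates hC hua ha hy hay).resolve_right fun e => hac (e ▸ hay)

lemma IsWeaklyTollLink.diff_subset_wtInterval_of_adj (h : IsWeaklyTollLink G u v C)
    (hgates : ∀ c ∈ gates G u v, G.neighborSet c ⊆ closedNbhd G u ∪ farSide G u v)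
    (hC : G.neighborSet u ∩ C = {c}) (hua : G.Adj u a) (ha : a ∉ wtInterval G {u, v})
    (hac : G.Adj a c) : C \ {u} ⊆ wtInterval G {a, v} := by
  have hne : a ≠ v := fun e => h.not_adj (e ▸ hua)
  have hav : ¬ G.Adj a v :=
    not_adj_farSide_of_notMem_wtInterval h.ne h.not_adj hua ha (right_mem_farSide h.ne h.not_adj)
  obtain ⟨huc, hcC⟩ : c ∈ G.neighborSet u ∩ C := hC ▸ rfl
  refine subset_trans (Set.subset_insert a _) (IsWeaklyTollLink.subset_wtInterval ?_)
  refine isWeaklyTollLink_insert_left h.connected_diff_left ⟨h.right_mem, h.ne.symm⟩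
    (h.right_subsingleton.anti (by grind)) hne hav ⟨hcC, huc.ne'⟩ hac fun y hy hay => ?_
  exact (h.eq_or_eq_of_adj hgates hC hua ha hy.1 hay).resolve_left hy.2

lemma mem_wtInterval_of_adj_gate (hne : u ≠ v) (hadj : ¬ G.Adj u v) (hc : c ∈ gates G u v)
    (hcz : G.Adj c z) (hz : z ∉ closedNbhd G u ∪ farSide G u v) (hua : G.Adj u a)
    (ha : a ∉ wtInterval G {u, v}) : a ∈ wtInterval G {u, v, z} := by
  obtain ⟨hzN, hzF⟩ : z ∉ closedNbhd G u ∧ z ∉ farSide G u v := by simpa using hz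
  obtain ⟨hzu, huz⟩ : z ≠ u ∧ ¬ G.Adj u z := by simpa [mem_closedNbhd] using hzN
  by_cases haz : G.Adj a z
  · exact wtInterval_mono (by grind)
      ((isWeaklyTollLink_triple hzu.symm huz hua haz).subset_wtInterval (by simp))
  obtain ⟨D, hDF, hD, hcD, hvD, hsub⟩ := exists_connected_of_mem_gates hc
  have hvF := right_mem_farSide hne hadj
  have hav := not_adj_farSide_of_notMem_wtInterval hne hadj hua ha hvF
  have hzF' {y : V} (hy : y ∈ farSide G u v) : ¬ G.Adj z y := fun hzy =>
    hzF (mem_farSide_of_adj hy hzy hzN)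
  have hconn : (G.induce (insert a (insert u D))).Connected :=
    connected_induce_insert (connected_induce_insert hD hcD hc.1) (Set.mem_insert _ _) hua.symm
  -- This is the vertex set of a walk `z, c, u, a, u, c, …, v`.
  have hlink : IsWeaklyTollLink G z v (insert z (insert a (insert u D))) := by
    refine isWeaklyTollLink_insert_left hconn (by simp [hvD]) ?_ (by grind) (hzF' hvF)
      (c := c) (by simp [hcD]) hcz.symm ?_
    · rwa [neighborSet_inter_insert (mt Adj.symm hav),
        neighborSet_inter_insert (mt Adj.symm hadj)]
    · rintro y (rfl | rfl | hyD) hzy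
      · exact absurd hzy.symm haz
      · exact absurd hzy.symm huz
      · exact (hDF hyD).resolve_right fun hyF => hzF' hyF hzy
  exact wtInterval_mono (by grind) (hlink.subset_wtInterval (by simp))

end Gates

/-- A pair of distinct nonadjacent vertices whose interval is inclusion-maximal among the intervals
of pairs. -/
structure IsMaximalPair (G : SimpleGraph V) (u v : V) : Prop where
  ne : u ≠ v
  not_adj : ¬ G.Adj u v
  not_ssubset (w z : V) : ¬ wtInterval G {u, v} ⊂ wtInterval G {w, z}

section Maximal

variable {G : SimpleGraph V} {a b c d u v x y : V}

lemma IsMaximalPair.symm (h : IsMaximalPair G u v) : IsMaximalPair G v u :=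
  ⟨h.ne.symm, mt Adj.symm h.not_adj, Set.pair_comm u v ▸ h.not_ssubset⟩

lemma closedNbhd_subset_of_not_ssubset (hmax : ∀ w z, ¬ wtInterval G {u, v} ⊂ wtInterval G {w, z})
    (huv : G.Adj u v) : closedNbhd G v ⊆ closedNbhd G u := by
  intro x hx
  by_contra hxu
  obtain ⟨hne, hadj⟩ : x ≠ u ∧ ¬ G.Adj u x := by simpa [mem_closedNbhd] using hxu
  have hvx : G.Adj v x := hx.resolve_left fun h => hadj (h ▸ huv)
  have hsub := (isWeaklyTollLink_triple hne.symm hadj huv hvx).subset_wtInterval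
  refine hmax u x ?_
  rw [wtInterval_pair_of_eq_or_adj (Or.inr huv)]
  refine ⟨subset_trans (by grind) hsub, fun h => ?_⟩
  have := h (hsub (by simp : x ∈ _))
  grind

lemma isMaximalPair_of_not_wtConvex
    (hmax : ∀ w z, ¬ wtInterval G {u, v} ⊂ wtInterval G {w, z})
    (hu : ¬ WTConvex G ({u}ᶜ : Set V)) : IsMaximalPair G u v := by
  suffices h : ¬ (u = v ∨ G.Adj u v) from ⟨fun e => h (Or.inl e), fun e => h (Or.inr e), hmax⟩
  intro huv
  have htwin : v ∈ twinClass G u := by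
    rcases huv with rfl | huv
    · exact rfl
    · exact Set.Subset.antisymm (closedNbhd_subset_of_not_ssubset hmax huv)
        (closedNbhd_subset_of_not_ssubset (Set.pair_comm u v ▸ hmax) huv.symm)
  obtain ⟨p, q, C, hpu, hqu, hC, huC⟩ := exists_isWeaklyTollLink_of_not_wtConvex hu
  refine hmax p q ?_
  rw [wtInterval_pair_of_eq_or_adj huv]
  refine ⟨Set.pair_subset (hC.subset_wtInterval huC)
    (hC.mem_wtInterval_of_mem_twinClass huC hpu hqu htwin), fun h => hC.ne ?_⟩
  have hp := h (hC.subset_wtInterval hC.left_mem)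
  have hq := h (hC.subset_wtInterval hC.right_mem)
  exact (hp.resolve_left hpu).trans (hq.resolve_left hqu).symm

lemma IsMaximalPair.not_adj_of_notMem_of_adj (h : IsMaximalPair G u v) (hG : G.Connected)
    (hd : d ∉ wtInterval G {u, v}) (hud : ¬ G.Adj u d) (hvd : ¬ G.Adj v d)
    (hy : y ∉ wtInterval G {u, v}) (hdy : G.Adj d y) : ¬ G.Adj u y := by
  intro huy
  have hdv : d ≠ v := fun e => hd (Or.inl (by simp [e]))
  have hvy : ¬ G.Adj v y := mt Adj.symm
    (not_adj_farSide_of_notMem_wtInterval h.ne h.not_adj huy hy (right_mem_farSide h.ne h.not_adj))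
  have hlink {C : Set V} (hC : IsWeaklyTollLink G u v C) :
      IsWeaklyTollLink G d v (insert d (insert y C)) := by
    have hdC (z : V) (hz : z ∈ C) : ¬ G.Adj d z := fun hdz =>
      hd ((hC.insert_of_not_adj hz hdz hud hvd).subset_wtInterval (Set.mem_insert _ _))
    refine isWeaklyTollLink_insert_left
      (connected_induce_insert hC.connected hC.left_mem huy.symm)
      (Set.mem_insert_of_mem _ hC.right_mem) ?_ hdv (mt Adj.symm hvd) (Set.mem_insert _ _) hdy ?_
    · rw [neighborSet_inter_insert hvy]
      exact hC.right_subsingleton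
    · exact fun z hz hdz => hz.resolve_right fun hzC => hdC z hzC hdz
  refine h.not_ssubset d v ⟨fun x hx => ?_, fun hsub => hd (hsub (Or.inl (by simp)))⟩
  obtain ⟨C, hC, hxC⟩ := (mem_wtInterval_pair_iff hG h.ne h.not_adj).1 hx
  exact (hlink hC).subset_wtInterval (by simp [hxC])

lemma IsMaximalPair.adj_or_adj_of_notMem (h : IsMaximalPair G u v) (hG : G.Connected)
    (hx : x ∉ wtInterval G {u, v}) : G.Adj u x ∨ G.Adj v x := by
  by_contra hcon
  let S : Set V := {d | d ∉ wtInterval G {u, v} ∧ ¬ (G.Adj u d ∨ G.Adj v d)}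
  have hu : u ∉ S := fun hu => hu.1 (Or.inl (by simp))
  obtain ⟨p⟩ := hG.preconnected x u
  obtain ⟨⟨⟨d, y⟩, hdy⟩, -, ⟨hd, hd'⟩, hyS⟩ := p.exists_boundary_dart S ⟨hx, hcon⟩ hu
  dsimp only at hdy hd hd' hyS
  obtain ⟨hud, hvd⟩ := not_or.1 hd'
  have hy : y ∉ wtInterval G {u, v} := fun hy => by
    obtain ⟨C, hC, hyC⟩ := (mem_wtInterval_pair_iff hG h.ne h.not_adj).1 hy
    exact hd ((hC.insert_of_not_adj hyC hdy hud hvd).subset_wtInterval (Set.mem_insert _ _))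
  rcases not_not.1 fun hy' => hyS ⟨hy, hy'⟩ with huy | hvy
  · exact h.not_adj_of_notMem_of_adj hG hd hud hvd hy hdy huy
  · rw [Set.pair_comm] at hd hy
    exact h.symm.not_adj_of_notMem_of_adj hG hd hvd hud hy hdy hvy

lemma IsMaximalPair.adj_of_mem_gates (h : IsMaximalPair G u v) (hG : G.Connected)
    (hgates : ∀ c ∈ gates G u v, G.neighborSet c ⊆ closedNbhd G u ∪ farSide G u v)
    (hua : G.Adj u a) (ha : a ∉ wtInterval G {u, v}) (hc : c ∈ gates G u v) : G.Adj a c := by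
  have hmem {x : V} := mem_wtInterval_pair_iff (x := x) hG h.ne h.not_adj
  by_contra hac
  have hu : u ∈ wtInterval G {a, v} := by
    obtain ⟨C, hC, hcC⟩ := hmem.1 (gates_subset_wtInterval h.ne h.not_adj hc)
    have hCc := hC.left_subsingleton.eq_singleton_of_mem ⟨hc.1, hcC⟩
    exact hC.subset_wtInterval_of_not_adj hgates hCc hua ha hac hC.left_mem
  refine h.not_ssubset a v ⟨fun x hx => ?_, fun hsub => ha (hsub (Or.inl (by simp)))⟩
  obtain ⟨C, hC, hxC⟩ := hmem.1 hx
  obtain ⟨b, -, hb⟩ := hC.exists_mem_gates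
  by_cases hab : G.Adj a b
  · by_cases hxu : x = u
    · exact hxu ▸ hu
    · exact hC.diff_subset_wtInterval_of_adj hgates hb hua ha hab ⟨hxC, hxu⟩
  · exact hC.subset_wtInterval_of_not_adj hgates hb hua ha hab hxC

lemma IsMaximalPair.adj_of_notMem (h : IsMaximalPair G u v) (hG : G.Connected)
    (hgates : ∀ c ∈ gates G u v, G.neighborSet c ⊆ closedNbhd G u ∪ farSide G u v)
    (hua : G.Adj u a) (ha : a ∉ wtInterval G {u, v}) (hub : G.Adj u b)
    (hb : b ∉ wtInterval G {u, v}) (hab : a ≠ b) : G.Adj a b := by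
  by_contra hnadj
  have hlink {C : Set V} (hC : IsWeaklyTollLink G u v C) :
      IsWeaklyTollLink G a b (insert a (insert b (C \ {u}))) := by
    obtain ⟨c, hc, hcC⟩ := hC.exists_mem_gates
    have hcmem : c ∈ C \ {u} := ⟨(hcC ▸ rfl : c ∈ G.neighborSet u ∩ C).2, hc.1.ne'⟩
    have hgate {d : V} (hud : G.Adj u d) (hd : d ∉ wtInterval G {u, v}) : G.Adj d c :=
      h.adj_of_mem_gates hG hgates hud hd hc
    have honly {d : V} (hud : G.Adj u d) (hd : d ∉ wtInterval G {u, v}) (y : V)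
        (hy : y ∈ C \ {u}) (hdy : G.Adj d y) : y = c :=
      (hC.eq_or_eq_of_adj hgates hcC hud hd hy.1 hdy).resolve_left hy.2
    refine isWeaklyTollLink_insert_left
      (connected_induce_insert hC.connected_diff_left hcmem (hgate hub hb)) (Set.mem_insert _ _)
      ?_ hab hnadj (Set.mem_insert_of_mem _ hcmem) (hgate hua ha) ?_
    · rw [neighborSet_inter_insert G.irrefl]
      exact Set.subsingleton_of_subset_singleton fun y hy => honly hub hb y hy.2 hy.1
    · rintro y (rfl | hy) hay
      · exact absurd hay hnadj
      · exact honly hua ha y hy hay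
  refine h.not_ssubset a b ⟨fun x hx => ?_, fun hsub => ha (hsub (Or.inl (by simp)))⟩
  obtain ⟨C, hC, hxC⟩ := (mem_wtInterval_pair_iff hG h.ne h.not_adj).1 hx
  by_cases hxu : x = u
  · exact (isWeaklyTollLink_triple hab hnadj hua.symm hub).subset_wtInterval (by simp [hxu])
  · exact (hlink hC).subset_wtInterval (by simp [hxC, hxu])

lemma IsMaximalPair.mem_twinClass (h : IsMaximalPair G u v) (hG : G.Connected)
    (hgates : ∀ c ∈ gates G u v, G.neighborSet c ⊆ closedNbhd G u ∪ farSide G u v)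
    (hua : G.Adj u a) (ha : a ∉ wtInterval G {u, v}) : a ∈ twinClass G u := by
  have hmem {x : V} := mem_wtInterval_pair_iff (x := x) hG h.ne h.not_adj
  refine Set.Subset.antisymm ?_ ?_
  · rintro y (rfl | hay)
    · exact Or.inr hua
    by_contra hyN
    suffices hyF : y ∈ farSide G u v from
      not_adj_farSide_of_notMem_wtInterval h.ne h.not_adj hua ha hyF hay
    by_cases hy : y ∈ wtInterval G {u, v}
    · obtain ⟨C, hC, hyC⟩ := hmem.1 hy
      exact (hC.subset_closedNbhd_union_farSide hgates hyC).resolve_left hyN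
    · have hvy := (h.adj_or_adj_of_notMem hG hy).resolve_left fun huy => hyN (Or.inr huy)
      exact mem_farSide_of_adj (right_mem_farSide h.ne h.not_adj) hvy.symm hyN
  · rintro y (rfl | huy)
    · exact Or.inr hua.symm
    by_cases hy : y ∈ wtInterval G {u, v}
    · obtain ⟨C, hC, hyC⟩ := hmem.1 hy
      obtain ⟨c, hc, hcC⟩ := hC.exists_mem_gates
      obtain rfl : y = c := hcC.subset ⟨huy, hyC⟩
      exact Or.inr (h.adj_of_mem_gates hG hgates hua ha hc)
    · exact or_iff_not_imp_left.2 fun hya => h.adj_of_notMem hG hgates hua ha huy hy (Ne.symm hya)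

lemma IsMaximalPair.exists_neighborSet_subset_wtInterval (h : IsMaximalPair G u v)
    (hG : G.Connected) (hu : ¬ WTConvex G ({u}ᶜ : Set V)) :
    ∃ p q, G.neighborSet u ⊆ wtInterval G {u, v, p, q} := by
  have hcover {p q : V}
      (hpq : ∀ a, G.Adj u a → a ∉ wtInterval G {u, v} → a ∈ wtInterval G {u, v, p, q}) :
      G.neighborSet u ⊆ wtInterval G {u, v, p, q} := fun a hua => by
    by_cases ha : a ∈ wtInterval G {u, v}
    · exact wtInterval_mono (by grind) ha
    · exact hpq a hua ha
  by_cases hgates : ∀ c ∈ gates G u v, G.neighborSet c ⊆ closedNbhd G u ∪ farSide G u v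
  · obtain ⟨p, q, C, hpu, hqu, hC, huC⟩ := exists_isWeaklyTollLink_of_not_wtConvex hu
    exact ⟨p, q, hcover fun a hua ha => wtInterval_mono (by grind)
      (hC.mem_wtInterval_of_mem_twinClass huC hpu hqu (h.mem_twinClass hG hgates hua ha))⟩
  · simp only [not_forall, Set.not_subset] at hgates
    obtain ⟨c, hc, z, hcz, hz⟩ := hgates
    exact ⟨z, z, hcover fun a hua ha => wtInterval_mono (by grind)
      (mem_wtInterval_of_adj_gate h.ne h.not_adj hc hcz hz hua ha)⟩

end Maximal

theorem stmt14_general (G : SimpleGraph V) (hconn : G.Connected) (u v : V)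
    (hmax : ∀ w z : V, ¬ wtInterval G {u, v} ⊂ wtInterval G {w, z})
    (hu : ¬ WTConvex G ({u}ᶜ : Set V)) (hv : ¬ WTConvex G ({v}ᶜ : Set V)) :
    ∃ S : Finset V, S.card ≤ 6 ∧ wtInterval G ↑S = Set.univ := by
  classical
  have h : IsMaximalPair G u v := isMaximalPair_of_not_wtConvex hmax hu
  obtain ⟨p, q, hpq⟩ := h.exists_neighborSet_subset_wtInterval hconn hu
  obtain ⟨r, s, hrs⟩ := h.symm.exists_neighborSet_subset_wtInterval hconn hv
  refine ⟨{u, v, p, q, r, s}, Finset.card_le_six, Set.eq_univ_of_forall fun x => ?_⟩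
  push_cast
  by_cases hx : x ∈ wtInterval G {u, v}
  · exact wtInterval_mono (by grind) hx
  rcases h.adj_or_adj_of_notMem hconn hx with hux | hvx
  · exact wtInterval_mono (by grind) (hpq hux)
  · exact wtInterval_mono (by grind) (hrs hvx)

/-- if `u,v` maximize the weakly toll interval in a connected
non-complete graph and neither is a weakly toll extreme vertex, then
`wtn(G) ≤ 8`. -/
theorem stmt14 [Fintype V] (G : SimpleGraph V) (hconn : G.Connected)
    (hnc : ∃ a b : V, a ≠ b ∧ ¬ G.Adj a b) (u v : V)
    (hmax : ∀ w z : V, (wtInterval G {w, z}).ncard ≤ (wtInterval G {u, v}).ncard)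
    (hu : ¬ WTConvex G ({u}ᶜ : Set V)) (hv : ¬ WTConvex G ({v}ᶜ : Set V)) :
    wtn G ≤ 8 := by
  obtain ⟨S, hcard, hS⟩ := stmt14_general G hconn u v
    (fun w z h => (Set.ncard_lt_ncard h).not_ge (hmax w z)) hu hv
  calc wtn G ≤ S.card := Nat.sInf_le ⟨S, rfl, hS⟩
    _ ≤ 8 := hcard.trans (by norm_num)
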